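/- arXiv:2408.15210 — 2 statements merged into one kernel-verified Lean document; each statement's English description precedes it below -/
import Mathlib

section
/- (Theorem 2, part iii) Consider the deterministic augmented LTI system P_d: x_{k+1} = A x_k + B_d d_k + B u_k, d_{k+1} = A_d d_k, y_k = C x_k + C_d d_k + D u_k, with x_k ∈ ℝ^{n_x}, d_k ∈ ℝ^{n_d}, u_k ∈ ℝ^{n_u}, y_k ∈ ℝ^{n_y}, augmented state x̄_k = [x_k; d_k] ∈ ℝ^{n̄}, n̄ = n_x + n_d. Let u^m_k, x̄^m_k, y^m_k be a measured trajectory of P_d over time steps k = 0, ..., N + L + n̄ - 2. Suppose the pair (A, B) is controllable, the controllability matrix of (A_d, d^m_0) has rank ν with 1 ≤ ν < n_d, and the input {u^m_k}_{k=0}^{N+L+n̄-2} is persistently exciting of order L + n̄. Then for every L-long input–output trajectory (u_0, ..., u_{L-1}, y_0, ..., y_{L-1}) of P_d generated from some initial state x_0 ∈ ℝ^{n_x} and some initial disturbance d_0 lying in the column space of the controllability matrix [d^m_0, A_d d^m_0, ..., A_d^{n_d-1} d^m_0], there exists g ∈ ℝ^{N+n̄} such that [H_{0,L,N+n̄}(u^m);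 H_{0,L,N+n̄}(y^m)] g = [u_0; ...; u_{L-1}; y_0; ...; y_{L-1}]. -/
/-!
The proof is the duality argument behind Willems' fundamental lemma, applied to the augmented
state `z = (x, d)` with dynamics `z (k + 1) = M z k + G u k`, `M = [A, Bd; 0, Ad]`, `G = [B; 0]`.

Suppose a linear functional `(ξ, η)` annihilates all data columns
`(u_j, ..., u_{j+L-1}, z_j)`, `j < N + n`, where `n = nx + nd`. Writing `z_{j+i}` in terms of `z_j`
and of the inputs, and combining the relations at times `j, ..., j + n` with the coefficients of
the characteristic polynomial of `M`, the state term disappears by Cayley-Hamilton. What remains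
is a functional of `L + n` consecutive inputs, which vanishes by persistency of excitation. Since
the characteristic polynomial is monic, its coefficients can be eliminated from the last one
backwards, giving `ξ = 0` and `η M^k G = 0` for `k < n` (`annihilator_trivial`). Since
`M^k G = [A^k B; 0]`, controllability of `(A, B)` forces the `x`-part of `η` to vanish, and then
the `d`-part is orthogonal to `d_j = Ad^j d_0`, hence to the column space of `ctrbVec Ad (dm 0)`.

By duality every `(u_0, ..., u_{L-1}, x_0, d_0)` with `d_0` in that column space is a combination
of the data columns, and linearity of the dynamics propagates the combination to the outputs.
-/

open Matrix

/-- Block-Hankel matrix `H_{i,s,N}(w)` of a vector-valued sequence `w`: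
the `((a, v), b)` entry is `w (i + a + b) v`. -/
noncomputable def blockHankel {ι : Type*} (w : ℕ → ι → ℝ) (i s N : ℕ) :
    Matrix (Fin s × ι) (Fin N) ℝ :=
  Matrix.of fun p b => w (i + (p.1 : ℕ) + (b : ℕ)) p.2

/-- Depth-1 block-Hankel matrix `H_{i,1,N}(w)`, with rows indexed directly by
the signal components. -/
noncomputable def hankelState {ι : Type*} (w : ℕ → ι → ℝ) (i N : ℕ) :
    Matrix ι (Fin N) ℝ :=
  Matrix.of fun r b => w (i + (b : ℕ)) r

/-- Controllability matrix `[B, AB, ..., A^{n-1}B]` of the pair `(A, B)`. -/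
noncomputable def ctrbMat {n r : ℕ} (A : Matrix (Fin n) (Fin n) ℝ)
    (B : Matrix (Fin n) (Fin r) ℝ) : Matrix (Fin n) (Fin n × Fin r) ℝ :=
  Matrix.of fun i p => (A ^ (p.1 : ℕ) * B) i p.2

/-- Controllability matrix `[d₀, A_d d₀, ..., A_d^{n_d-1} d₀]` of a pair
`(A_d, d₀)` consisting of a matrix and a vector. -/
noncomputable def ctrbVec {n : ℕ} (Ad : Matrix (Fin n) (Fin n) ℝ)
    (d0 : Fin n → ℝ) : Matrix (Fin n) (Fin n) ℝ :=
  Matrix.of fun i j => ((Ad ^ (j : ℕ)) *ᵥ d0) i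

theorem eq_zero_of_vecMul_eq_zero_of_rank {m n : Type*} [Fintype m] [Fintype n]
    (M : Matrix m n ℝ) (h : M.rank = Fintype.card m) (c : m → ℝ) (hc : c ᵥ* M = 0) :
    c = 0 := by
  have hli : LinearIndependent ℝ M.row := by
    rw [linearIndependent_iff_card_eq_finrank_span, ← h, Matrix.rank_eq_finrank_span_row]
    rfl
  have hinj := Matrix.vecMul_injective_iff.mpr hli
  exact hinj (by simpa using hc)

/-- A vector annihilated by the whole left kernel of `M` lies in the column space of `M`. -/
theorem exists_mulVec_eq_of_left_ker {m n : Type*} [Fintype m] [Fintype n]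
    (M : Matrix m n ℝ) (v : m → ℝ) (h : ∀ c : m → ℝ, c ᵥ* M = 0 → c ⬝ᵥ v = 0) :
    ∃ g, M *ᵥ g = v := by
  classical
  by_contra hne
  have hv : v ∉ LinearMap.range M.mulVecLin := by
    rintro ⟨g, hg⟩
    exact hne ⟨g, by simpa using hg⟩
  obtain ⟨f, hf, hle⟩ := Submodule.exists_le_ker_of_notMem hv
  obtain ⟨c, rfl⟩ := (dotProductEquiv ℝ m).surjective f
  refine hf ?_
  have hc : c ᵥ* M = 0 := by
    refine dotProduct_eq_zero _ fun g => ?_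
    have hg : M *ᵥ g ∈ LinearMap.ker (dotProductEquiv ℝ m c) := hle ⟨g, rfl⟩
    rw [← Matrix.dotProduct_mulVec]
    simpa using hg
  simpa using h c hc

/-- A sequence that vanishes from index `K` on and satisfies a linear recurrence with monic
leading coefficient at the lowest index is zero. -/
theorem eq_zero_of_backward_recurrence {V : Type*} [AddCommGroup V] [Module ℝ V]
    (n K : ℕ) (α : ℕ → ℝ) (hα : α n = 1) (φ : ℕ → V) (hφ : ∀ m, K ≤ m → φ m = 0)
    (h : ∀ t, t < K → ∑ i ∈ Finset.range (n + 1), α i • φ (t + (n - i)) = 0) (t : ℕ) :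
    φ t = 0 := by
  suffices H : ∀ r t, K ≤ t + r → φ t = 0 from H K t (by omega)
  intro r
  induction r with
  | zero => intro t ht; exact hφ t (by omega)
  | succ r ih =>
    intro t ht
    by_cases htK : K ≤ t
    · exact hφ t htK
    have h1 := h t (by omega)
    rw [Finset.sum_range_succ, Finset.sum_eq_zero] at h1
    · simpa [hα] using h1
    · intro i hi
      rw [Finset.mem_range] at hi
      rw [ih _ (by omega), smul_zero]

/-- Variation-of-constants formula, tested against a functional `η`. -/
theorem dotProduct_state_shift {ι κ : Type*} [Fintype ι] [Fintype κ] [DecidableEq ι]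
    (M : Matrix ι ι ℝ) (G : Matrix ι κ ℝ) (z : ℕ → ι → ℝ) (w : ℕ → κ → ℝ) (T : ℕ)
    (hz : ∀ k, k < T → z (k + 1) = M *ᵥ z k + G *ᵥ w k) (η : ι → ℝ) (i : ℕ) :
    ∀ j, j + i ≤ T → η ⬝ᵥ z (j + i) =
      ∑ t ∈ Finset.range i, (η ᵥ* (M ^ (i - 1 - t) * G)) ⬝ᵥ w (j + t)
        + (η ᵥ* M ^ i) ⬝ᵥ z j := by
  induction i with
  | zero => intro j _; simp
  | succ i ih =>
    intro j hj
    have h1 := ih (j + 1) (by omega)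
    rw [show j + (i + 1) = j + 1 + i by omega, h1, Finset.sum_range_succ', hz j (by omega)]
    have h2 : ∀ t ∈ Finset.range i, (η ᵥ* (M ^ (i - 1 - t) * G)) ⬝ᵥ w (j + 1 + t)
        = (η ᵥ* (M ^ (i + 1 - 1 - (t + 1)) * G)) ⬝ᵥ w (j + (t + 1)) := by
      intro t _
      rw [show i + 1 - 1 - (t + 1) = i - 1 - t by omega, show j + (t + 1) = j + 1 + t by omega]
    rw [Finset.sum_congr rfl h2, dotProduct_add, pow_succ, ← Matrix.vecMul_vecMul,
      ← Matrix.vecMul_vecMul, ← Matrix.dotProduct_mulVec, ← Matrix.dotProduct_mulVec]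
    simp [Matrix.dotProduct_mulVec]
    ring

/-- Functionals annihilating all data columns `(w_j, ..., w_{j+L-1}, z_j)` are zero on the inputs
and, on the state, vanish on the controllable subspace. The hypothesis `hPE` is persistency of
excitation of order `L + card ι`. -/
theorem annihilator_trivial {ι κ : Type*} [Fintype ι] [Fintype κ] [DecidableEq ι]
    (M : Matrix ι ι ℝ) (G : Matrix ι κ ℝ) (z : ℕ → ι → ℝ) (w : ℕ → κ → ℝ) (N L n : ℕ)
    (hn : Fintype.card ι = n)
    (hz : ∀ k, k + 1 < N + n → z (k + 1) = M *ᵥ z k + G *ᵥ w k)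
    (hPE : ∀ c : ℕ → κ → ℝ,
      (∀ j, j < N → ∑ t ∈ Finset.range (L + n), c t ⬝ᵥ w (j + t) = 0) →
      ∀ t, t < L + n → c t = 0)
    (ξ : ℕ → κ → ℝ) (η : ι → ℝ)
    (hann : ∀ j, j < N + n →
      ∑ s ∈ Finset.range L, ξ s ⬝ᵥ w (j + s) + η ⬝ᵥ z j = 0) :
    (∀ s, s < L → ξ s = 0) ∧ ∀ k, k < n → η ᵥ* (M ^ k * G) = 0 := by
  -- The relation at time `j + i` has coefficient `φ (t + (n - i))` at the input `w (j + t)`.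
  let φ : ℕ → κ → ℝ := fun m =>
    if m < n then η ᵥ* (M ^ (n - 1 - m) * G) else if m < n + L then ξ (m - n) else 0
  let α : ℕ → ℝ := fun i => M.charpoly.coeff i
  have hdeg : M.charpoly.natDegree = n := by rw [Matrix.charpoly_natDegree_eq_dim, hn]
  have hα : α n = 1 := by
    have h := M.charpoly_monic
    rw [Polynomial.Monic, Polynomial.leadingCoeff, hdeg] at h
    exact h
  have hCH : ∑ i ∈ Finset.range (n + 1), α i • M ^ i = 0 := by
    have h := M.aeval_self_charpoly
    rwa [Polynomial.aeval_eq_sum_range, hdeg] at h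
  have hshift : ∀ i, i ≤ n → ∀ j, j < N →
      ∑ t ∈ Finset.range (L + n), φ (t + (n - i)) ⬝ᵥ w (j + t) + (η ᵥ* M ^ i) ⬝ᵥ z j = 0 := by
    intro i hi j hj
    have h1 := hann (j + i) (by omega)
    rw [dotProduct_state_shift M G z w (N + n - 1) (fun k hk => hz k (by omega)) η i j
      (by omega)] at h1
    rw [show L + n = i + (L + (n - i)) by omega, Finset.sum_range_add, Finset.sum_range_add]
    have e1 : ∑ t ∈ Finset.range i, φ (t + (n - i)) ⬝ᵥ w (j + t)
        = ∑ t ∈ Finset.range i, (η ᵥ* (M ^ (i - 1 - t) * G)) ⬝ᵥ w (j + t) := by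
      refine Finset.sum_congr rfl fun t ht => ?_
      rw [Finset.mem_range] at ht
      simp only [φ]
      rw [if_pos (by omega), show n - 1 - (t + (n - i)) = i - 1 - t by omega]
    have e2 : ∑ s ∈ Finset.range L, φ (i + s + (n - i)) ⬝ᵥ w (j + (i + s))
        = ∑ s ∈ Finset.range L, ξ s ⬝ᵥ w (j + i + s) := by
      refine Finset.sum_congr rfl fun s hs => ?_
      rw [Finset.mem_range] at hs
      simp only [φ]
      rw [if_neg (by omega), if_pos (by omega), show i + s + (n - i) - n = s by omega, add_assoc]
    have e3 : ∑ s ∈ Finset.range (n - i), φ (i + (L + s) + (n - i)) ⬝ᵥ w (j + (i + (L + s)))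
        = 0 := by
      refine Finset.sum_eq_zero fun s hs => ?_
      simp only [φ]
      rw [if_neg (by omega), if_neg (by omega), zero_dotProduct]
    rw [e1, e2, e3]
    linarith
  have hφ : ∀ t, φ t = 0 := by
    refine eq_zero_of_backward_recurrence n (L + n) α hα φ ?_ ?_
    · intro m hm
      simp only [φ]
      rw [if_neg (by omega), if_neg (by omega)]
    · refine hPE _ fun j hj => ?_
      have h2 : ∑ i ∈ Finset.range (n + 1), α i *
          (∑ t ∈ Finset.range (L + n), φ (t + (n - i)) ⬝ᵥ w (j + t)
            + (η ᵥ* M ^ i) ⬝ᵥ z j) = 0 := by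
        refine Finset.sum_eq_zero fun i hi => ?_
        rw [Finset.mem_range] at hi
        rw [hshift i (by omega) j hj, mul_zero]
      have h3 : ∑ i ∈ Finset.range (n + 1), α i * ((η ᵥ* M ^ i) ⬝ᵥ z j) = 0 := by
        have h4 : (η ᵥ* (∑ i ∈ Finset.range (n + 1), α i • M ^ i)) ⬝ᵥ z j = 0 := by
          simp [hCH]
        rw [← Matrix.dotProduct_mulVec, Matrix.sum_mulVec, dotProduct_sum] at h4
        rw [← h4]
        refine Finset.sum_congr rfl fun i _ => ?_
        rw [Matrix.smul_mulVec, dotProduct_smul, Matrix.dotProduct_mulVec, smul_eq_mul]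
      simp only [mul_add, Finset.sum_add_distrib, h3, add_zero, Finset.mul_sum] at h2
      rw [Finset.sum_comm] at h2
      rw [← h2]
      refine Finset.sum_congr rfl fun t _ => ?_
      rw [sum_dotProduct]
      refine Finset.sum_congr rfl fun i _ => ?_
      rw [smul_dotProduct, smul_eq_mul]
  constructor
  · intro s hs
    have h := hφ (n + s)
    simp only [φ] at h
    rwa [if_neg (by omega), if_pos (by omega), show n + s - n = s by omega] at h
  · intro k hk
    have h := hφ (n - 1 - k)
    simp only [φ] at h
    rwa [if_pos (by omega), show n - 1 - (n - 1 - k) = k by omega] at h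

/-- Rank formulation of persistency of excitation, turned into a statement about functionals. -/
theorem persistentlyExciting_functional {nu : ℕ} (w : ℕ → Fin nu → ℝ) (s N : ℕ)
    (h : (blockHankel w 0 s N).rank = s * nu) (c : ℕ → Fin nu → ℝ)
    (hc : ∀ j, j < N → ∑ t ∈ Finset.range s, c t ⬝ᵥ w (j + t) = 0) :
    ∀ t, t < s → c t = 0 := by
  have h0 := eq_zero_of_vecMul_eq_zero_of_rank (blockHankel w 0 s N) (by simpa using h)
    (fun p => c p.1 p.2) (by
      funext b
      rw [Pi.zero_apply, ← hc b b.2, ← Fin.sum_univ_eq_sum_range (fun t => c t ⬝ᵥ w (b + t))]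
      simp [Matrix.vecMul, dotProduct, blockHankel, Fintype.sum_prod_type, add_comm])
  intro t ht
  funext v
  exact congrFun h0 (⟨t, ht⟩, v)

theorem fromBlocks_pow_mul_fromRows {nx nd nu : ℕ} (A : Matrix (Fin nx) (Fin nx) ℝ)
    (Bd : Matrix (Fin nx) (Fin nd) ℝ) (B : Matrix (Fin nx) (Fin nu) ℝ)
    (Ad : Matrix (Fin nd) (Fin nd) ℝ) (k : ℕ) :
    fromBlocks A Bd 0 Ad ^ k * fromRows B (0 : Matrix (Fin nd) (Fin nu) ℝ)
      = fromRows (A ^ k * B) 0 := by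
  induction k with
  | zero => simp
  | succ k ih =>
    rw [pow_succ', Matrix.mul_assoc, ih, fromBlocks_mul_fromRows, pow_succ', Matrix.mul_assoc]
    simp

/-- **Theorem 2, part (iii): fundamental lemma for systems with an exogenous
disturbance.** For the augmented system `x_{k+1} = A x_k + B_d d_k + B u_k`,
`d_{k+1} = A_d d_k`, `y_k = C x_k + C_d d_k + D u_k`: if `(A, B)` is
controllable, the controllability matrix of `(A_d, d^m_0)` has rank `ν` with
`1 ≤ ν < n_d`, and the measured input over time steps `0, ..., N + L + n̄ - 2`
is persistently exciting of order `L + n̄`, then every `L`-long input-output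
trajectory generated from some initial state `x₀` and an initial disturbance
`d₀` in the column space of the controllability matrix of `(A_d, d^m_0)` is a
linear combination `g` of the columns of the stacked input/output block-Hankel
data matrix. -/
theorem fundamental_lemma_with_exogenous_disturbance
    (nx nd nu ny N L ν : ℕ)
    (A : Matrix (Fin nx) (Fin nx) ℝ) (Bd : Matrix (Fin nx) (Fin nd) ℝ)
    (B : Matrix (Fin nx) (Fin nu) ℝ) (Ad : Matrix (Fin nd) (Fin nd) ℝ)
    (C : Matrix (Fin ny) (Fin nx) ℝ) (Cd : Matrix (Fin ny) (Fin nd) ℝ)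
    (D : Matrix (Fin ny) (Fin nu) ℝ)
    (um : ℕ → Fin nu → ℝ) (xm : ℕ → Fin nx → ℝ) (dm : ℕ → Fin nd → ℝ)
    (ym : ℕ → Fin ny → ℝ)
    (htraj_x : ∀ k, k + 3 ≤ N + L + (nx + nd) →
      xm (k + 1) = A *ᵥ xm k + Bd *ᵥ dm k + B *ᵥ um k)
    (htraj_d : ∀ k, k + 3 ≤ N + L + (nx + nd) → dm (k + 1) = Ad *ᵥ dm k)
    (htraj_y : ∀ k, k + 2 ≤ N + L + (nx + nd) →
      ym k = C *ᵥ xm k + Cd *ᵥ dm k + D *ᵥ um k)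
    (hAB : (ctrbMat A B).rank = nx)
    (hAd : (ctrbVec Ad (dm 0)).rank = ν) (hν1 : 1 ≤ ν) (hνnd : ν < nd)
    (hPE : (blockHankel um 0 (L + (nx + nd)) N).rank = (L + (nx + nd)) * nu) :
    ∀ (u : ℕ → Fin nu → ℝ) (y : ℕ → Fin ny → ℝ),
      (∃ (x : ℕ → Fin nx → ℝ) (d : ℕ → Fin nd → ℝ),
        (∃ c : Fin nd → ℝ, (ctrbVec Ad (dm 0)) *ᵥ c = d 0) ∧
        (∀ k, k + 1 < L → x (k + 1) = A *ᵥ x k + Bd *ᵥ d k + B *ᵥ u k) ∧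
        (∀ k, k + 1 < L → d (k + 1) = Ad *ᵥ d k) ∧
        (∀ k, k < L → y k = C *ᵥ x k + Cd *ᵥ d k + D *ᵥ u k)) →
      ∃ g : Fin (N + (nx + nd)) → ℝ,
        (fromRows (blockHankel um 0 L (N + (nx + nd)))
                  (blockHankel ym 0 L (N + (nx + nd)))) *ᵥ g
          = Sum.elim (fun p : Fin L × Fin nu => u (p.1 : ℕ) p.2)
                     (fun p : Fin L × Fin ny => y (p.1 : ℕ) p.2) := by
  rintro u y ⟨x, d, ⟨c, hc⟩, hx, hd, hy⟩
  -- For `L = 0` the data matrix has no rows.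
  rcases Nat.eq_zero_or_pos L with rfl | hL
  · refine ⟨0, ?_⟩
    funext p
    rcases p with p | p <;> exact p.1.elim0
  let M := fromBlocks A Bd 0 Ad
  let G := fromRows B (0 : Matrix (Fin nd) (Fin nu) ℝ)
  let zm : ℕ → Fin nx ⊕ Fin nd → ℝ := fun k => Sum.elim (xm k) (dm k)
  let z : ℕ → Fin nx ⊕ Fin nd → ℝ := fun k => Sum.elim (x k) (d k)
  have hzm : ∀ k, k + 3 ≤ N + L + (nx + nd) → zm (k + 1) = M *ᵥ zm k + G *ᵥ um k := by
    intro k hk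
    simp only [zm, M, G, htraj_x k hk, htraj_d k hk, fromBlocks_mulVec, fromRows_mulVec]
    funext p
    rcases p with p | p <;> simp
  have hz : ∀ k, k + 1 < L → z (k + 1) = M *ᵥ z k + G *ᵥ u k := by
    intro k hk
    simp only [z, M, G, hx k hk, hd k hk, fromBlocks_mulVec, fromRows_mulVec]
    funext p
    rcases p with p | p <;> simp
  have hdm : ∀ j, j + 2 ≤ N + L + (nx + nd) → dm j = Ad ^ j *ᵥ dm 0 := by
    intro j
    induction j with
    | zero => simp
    | succ j ih =>
      intro hj
      rw [htraj_d j (by omega), ih (by omega), pow_succ', Matrix.mulVec_mulVec]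
  obtain ⟨g, hg⟩ := exists_mulVec_eq_of_left_ker
    (fromRows (blockHankel um 0 L (N + (nx + nd))) (hankelState zm 0 (N + (nx + nd))))
    (Sum.elim (fun p : Fin L × Fin nu => u (p.1 : ℕ) p.2) (z 0)) (by
      intro e he
      obtain ⟨ξ, hξ⟩ : ∃ ξ : ℕ → Fin nu → ℝ, ∀ (s : Fin L) v, ξ s v = e (Sum.inl (s, v)) :=
        ⟨fun s v => if hs : s < L then e (Sum.inl (⟨s, hs⟩, v)) else 0, by simp⟩
      have hann : ∀ j, j < N + (nx + nd) →
          ∑ s ∈ Finset.range L, ξ s ⬝ᵥ um (j + s) + (fun q => e (Sum.inr q)) ⬝ᵥ zm j = 0 := by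
        intro j hj
        have h := congrFun he ⟨j, hj⟩
        rw [Pi.zero_apply] at h
        rw [← h, ← Fin.sum_univ_eq_sum_range (fun s => ξ s ⬝ᵥ um (j + s))]
        simp only [Matrix.vecMul, dotProduct, Fintype.sum_sum_type, fromRows_apply_inl,
          fromRows_apply_inr, Fintype.sum_prod_type, blockHankel, hankelState, of_apply, hξ,
          zero_add, add_comm j]
      obtain ⟨hξ0, hη⟩ := annihilator_trivial M G zm um N L (nx + nd) (by simp)
        (fun k hk => hzm k (by omega))
        (persistentlyExciting_functional um _ N hPE) ξ (fun q => e (Sum.inr q)) hann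
      have hηx : (fun q => e (Sum.inr (Sum.inl q))) = (0 : Fin nx → ℝ) := by
        refine eq_zero_of_vecMul_eq_zero_of_rank (ctrbMat A B) (by simpa using hAB) _ ?_
        funext p
        have h := congrFun (hη p.1 (by omega)) p.2
        simp only [M, G, fromBlocks_pow_mul_fromRows] at h
        simpa [Matrix.vecMul, dotProduct, ctrbMat] using h
      have hηd : (fun q => e (Sum.inr (Sum.inr q))) ᵥ* ctrbVec Ad (dm 0) = 0 := by
        funext j
        have h := hann j (by omega)
        rw [Finset.sum_eq_zero (fun s hs => by
          rw [hξ0 s (Finset.mem_range.mp hs), zero_dotProduct])] at h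
        have hηx' : ∀ q, e (Sum.inr (Sum.inl q)) = 0 := congrFun hηx
        simp only [dotProduct, Fintype.sum_sum_type, hηx', zm, Sum.elim_inr,
          hdm j (by omega)] at h
        simpa [Matrix.vecMul, dotProduct, ctrbVec] using h
      have h1 : ∀ p : Fin L × Fin nu, e (Sum.inl p) = 0 := by
        intro p
        rw [← hξ, hξ0 p.1 p.1.2, Pi.zero_apply]
      have h2 : ∀ q, e (Sum.inr (Sum.inl q)) = 0 := congrFun hηx
      have h3 : (fun q => e (Sum.inr (Sum.inr q))) ⬝ᵥ d 0 = 0 := by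
        rw [← hc, Matrix.dotProduct_mulVec, hηd, zero_dotProduct]
      simpa [dotProduct, Fintype.sum_sum_type, h1, h2, z] using h3)
  rw [fromRows_mulVec, Sum.elim_eq_iff] at hg
  obtain ⟨hgu, hgz⟩ := hg
  have hu : ∀ k, k < L → ∑ b : Fin (N + (nx + nd)), g b • um (k + b) = u k := by
    intro k hk
    funext v
    have h := congrFun hgu (⟨k, hk⟩, v)
    simpa [Matrix.mulVec, dotProduct, blockHankel, mul_comm] using h
  have hzk : ∀ k, k < L → ∑ b : Fin (N + (nx + nd)), g b • zm (k + b) = z k := by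
    intro k
    induction k with
    | zero =>
      intro _
      rw [← hgz]
      funext v
      simp [Matrix.mulVec, dotProduct, hankelState, mul_comm]
    | succ k ih =>
      intro hk
      rw [hz k hk, ← ih (by omega), ← hu k (by omega), Matrix.mulVec_sum, Matrix.mulVec_sum,
        ← Finset.sum_add_distrib]
      refine Finset.sum_congr rfl fun b _ => ?_
      rw [show k + 1 + (b : ℕ) = k + b + 1 by omega, hzm (k + b) (by omega), smul_add,
        Matrix.mulVec_smul, Matrix.mulVec_smul]
  refine ⟨g, ?_⟩
  rw [fromRows_mulVec, hgu]
  congr 1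
  funext ⟨k, v⟩
  have hy' : y k = fromCols C Cd *ᵥ z k + D *ᵥ u k := by
    rw [hy k k.2, fromCols_mulVec]
    rfl
  have hsum : ∑ b : Fin (N + (nx + nd)), g b • ym (k + b) = y k := by
    rw [hy', ← hzk k k.2, ← hu k k.2, Matrix.mulVec_sum, Matrix.mulVec_sum,
      ← Finset.sum_add_distrib]
    refine Finset.sum_congr rfl fun b _ => ?_
    rw [htraj_y (k + b) (by omega), Matrix.mulVec_smul, Matrix.mulVec_smul, ← smul_add,
      fromCols_mulVec]
    rfl
  have h := congrFun hsum v
  simpa [Matrix.mulVec, dotProduct, blockHankel, mul_comm] using h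
end

section
/- (Corollary 1, rank statement) Consider the deterministic augmented LTI system P_d: x_{k+1} = A x_k + B_d d_k + B u_k, d_{k+1} = d_k (i.e., A_d = I_{n_d}), with x_k ∈ ℝ^{n_x}, constant nonzero disturbance d_k = d^m_0 ≠ 0 ∈ ℝ^{n_d} with n_d > 1, u_k ∈ ℝ^{n_u}, augmented state x̄_k = [x_k; d_k] ∈ ℝ^{n̄}, n̄ = n_x + n_d. Let u^m_k, x̄^m_k be a measured trajectory of P_d over time steps k = 0, ..., N + L + n̄ - 2, with (A, B) controllable and {u^m_k}_{k=0}^{N+L+n̄-2} persistently exciting of order L + n̄. Then the stacked matrix [H_{0,1,N+n̄}(x̄^m); H_{0,L,N+n̄}(u^m)] has rank exactly L·n_u + n_x + 1. -/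
/-!
The proof is the Willems-type argument: a left annihilator of the state/input data matrix is
propagated along the dynamics and combined with the coefficients of a characteristic polynomial.
By Cayley–Hamilton the state disappears, and what is left is a linear relation among shifted
inputs, which persistency of excitation forces to be trivial. The trivial relation is a monic
linear recurrence for the coefficient sequence `hankelCoeff`, which vanishes at large indices,
so the whole sequence vanishes (`annihilator_input_coeffs_zero`).

This is applied to the augmented state `(x, 1)` of dimension `nx + 1`, with transition matrix
`[[A, Bd d], [0, 1]]`; since `nd > 1`, the excitation order and the number of columns suffice.
Controllability of `(A, B)` then gives that `[x; 1; u]` has independent rows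
(`reduced_rows_independent`). The matrix in the theorem is `[x; 1; u]` multiplied on the left by a
matrix that has a left inverse because `d ≠ 0`, so the two have the same rank `nx + 1 + L * nu`.
-/

open Matrix

/-- Full row rank means that no nonzero row vector annihilates the matrix. -/
lemma vecMul_eq_zero_of_rank {m n : Type*} [Fintype m] [Fintype n]
    (M : Matrix m n ℝ) (h : M.rank = Fintype.card m) (v : m → ℝ) (hv : v ᵥ* M = 0) : v = 0 := by
  have hli : LinearIndependent ℝ M.row := by
    rw [linearIndependent_iff_card_eq_finrank_span, ← h, Matrix.rank_eq_finrank_span_row]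
    rfl
  rw [← Matrix.vecMul_injective_iff] at hli
  exact hli (by simpa using hv)

/-- The two-sided coefficient sequence of a functional `ξ · z k + ∑ a, ζ a · u (k + a)`: at `t ≥ 0`
it is `ζ t` (zero for `t ≥ L`), at `t = -(m + 1)` it is the Markov parameter `ξ M ^ m B`. Evaluated
at time `k + j`, the functional has coefficient `hankelCoeff (i - j)` on `u (k + i)`. -/
noncomputable def hankelCoeff {ι κ : Type*} [Fintype ι] [DecidableEq ι] {L : ℕ}
    (M : Matrix ι ι ℝ) (B : Matrix ι κ ℝ) (ξ : ι → ℝ) (ζ : Fin L → κ → ℝ) (t : ℤ) : κ → ℝ :=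
  if 0 ≤ t then (if h : t.toNat < L then ζ ⟨t.toNat, h⟩ else 0)
  else ξ ᵥ* (M ^ (-t - 1).toNat * B)

section Annihilator

variable {ι κ : Type*} [Fintype ι] [DecidableEq ι] {L : ℕ}

lemma hankelCoeff_of_lt (M : Matrix ι ι ℝ) (B : Matrix ι κ ℝ) (ξ : ι → ℝ) (ζ : Fin L → κ → ℝ)
    (a : ℕ) (h : a < L) : hankelCoeff M B ξ ζ a = ζ ⟨a, h⟩ := by
  simp [hankelCoeff, h]

lemma hankelCoeff_of_ge (M : Matrix ι ι ℝ) (B : Matrix ι κ ℝ) (ξ : ι → ℝ) (ζ : Fin L → κ → ℝ)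
    (t : ℤ) (h : (L : ℤ) ≤ t) : hankelCoeff M B ξ ζ t = 0 := by
  have h0 : 0 ≤ t := by omega
  have h1 : ¬ t.toNat < L := by omega
  simp [hankelCoeff, h0, h1]

lemma hankelCoeff_neg (M : Matrix ι ι ℝ) (B : Matrix ι κ ℝ) (ξ : ι → ℝ) (ζ : Fin L → κ → ℝ)
    (m : ℕ) : hankelCoeff M B ξ ζ (-(m + 1 : ℤ)) = ξ ᵥ* (M ^ m * B) := by
  have h0 : ¬ (0 : ℤ) ≤ -(m + 1 : ℤ) := by omega
  have h1 : (-(-(m + 1 : ℤ)) - 1).toNat = m := by omega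
  rw [hankelCoeff, if_neg h0, h1]

variable [Fintype κ]

/-- The solution of the state recursion, paired with a row vector. -/
lemma state_expand (M : Matrix ι ι ℝ) (B : Matrix ι κ ℝ) (u : ℕ → κ → ℝ) (z : ℕ → ι → ℝ)
    (k j : ℕ) (hz : ∀ i < j, z (k + i + 1) = M *ᵥ z (k + i) + B *ᵥ u (k + i)) (ξ : ι → ℝ) :
    ξ ⬝ᵥ z (k + j) = (ξ ᵥ* M ^ j) ⬝ᵥ z k
      + ∑ i ∈ Finset.range j, (ξ ᵥ* (M ^ (j - 1 - i) * B)) ⬝ᵥ u (k + i) := by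
  induction j generalizing ξ with
  | zero => simp
  | succ j ih =>
    rw [← add_assoc, hz j (by omega), dotProduct_add, dotProduct_mulVec, dotProduct_mulVec,
      ih (fun i hi => hz i (by omega)), Finset.sum_range_succ, vecMul_vecMul, ← pow_succ',
      add_assoc]
    congr 1
    congr 1
    · refine Finset.sum_congr rfl fun i hi => ?_
      have hi' := Finset.mem_range.1 hi
      rw [vecMul_vecMul, ← Matrix.mul_assoc, ← pow_succ',
        show j - 1 - i + 1 = j + 1 - 1 - i by omega]
    · simp

/-- The functional at time `k + j`, written in terms of the state at time `k` and the inputs from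
time `k` on; `K` is any horizon beyond the last input involved. -/
lemma functional_expand (M : Matrix ι ι ℝ) (B : Matrix ι κ ℝ) (u : ℕ → κ → ℝ) (z : ℕ → ι → ℝ)
    (k j K : ℕ) (hK : j + L ≤ K)
    (hz : ∀ i < j, z (k + i + 1) = M *ᵥ z (k + i) + B *ᵥ u (k + i))
    (ξ : ι → ℝ) (ζ : Fin L → κ → ℝ) :
    ξ ⬝ᵥ z (k + j) + ∑ a : Fin L, ζ a ⬝ᵥ u (k + j + a) = (ξ ᵥ* M ^ j) ⬝ᵥ z k
      + ∑ i ∈ Finset.range K, hankelCoeff M B ξ ζ ((i : ℤ) - j) ⬝ᵥ u (k + i) := by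
  obtain ⟨r, rfl⟩ := Nat.exists_eq_add_of_le hK
  rw [state_expand M B u z k j hz, Finset.sum_range_add, Finset.sum_range_add, add_assoc]
  congr 1
  have h1 : ∑ i ∈ Finset.range r,
      hankelCoeff M B ξ ζ (((j + L + i : ℕ) : ℤ) - j) ⬝ᵥ u (k + (j + L + i)) = 0 := by
    refine Finset.sum_eq_zero fun i _ => ?_
    rw [hankelCoeff_of_ge _ _ _ _ _ (by push_cast; omega), zero_dotProduct]
  rw [h1, add_zero]
  congr 1
  · refine Finset.sum_congr rfl fun i hi => ?_
    have hi' := Finset.mem_range.1 hi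
    rw [← hankelCoeff_neg M B ξ ζ, show -(((j - 1 - i : ℕ) : ℤ) + 1) = (i : ℤ) - j by omega]
  · rw [Finset.sum_range]
    refine Finset.sum_congr rfl fun a _ => ?_
    rw [show (((j + (a : ℕ) : ℕ) : ℤ) - j) = ((a : ℕ) : ℤ) by push_cast; ring,
      hankelCoeff_of_lt _ _ _ _ _ a.2, add_assoc]

/-- If a functional of state and inputs vanishes along the data, and the input is persistently
exciting of order `L + dim`, then its input coefficients and its first `dim` Markov parameters
vanish. No controllability is assumed. -/
lemma annihilator_input_coeffs_zero (M : Matrix ι ι ℝ) (B : Matrix ι κ ℝ)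
    (u : ℕ → κ → ℝ) (z : ℕ → ι → ℝ) (N : ℕ)
    (hz : ∀ k, k + 1 < N + Fintype.card ι → z (k + 1) = M *ᵥ z k + B *ᵥ u k)
    (hPE : ∀ v : ℕ → κ → ℝ,
      (∀ k < N, ∑ i ∈ Finset.range (L + Fintype.card ι), v i ⬝ᵥ u (k + i) = 0) →
      ∀ i < L + Fintype.card ι, v i = 0)
    (ξ : ι → ℝ) (ζ : Fin L → κ → ℝ)
    (hf : ∀ k < N + Fintype.card ι, ξ ⬝ᵥ z k + ∑ a : Fin L, ζ a ⬝ᵥ u (k + a) = 0) :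
    ζ = 0 ∧ ∀ m < Fintype.card ι, ξ ᵥ* (M ^ m * B) = 0 := by
  set n := Fintype.card ι with hn
  set g := hankelCoeff M B ξ ζ with hg
  set q := M.charpoly with hq
  have hdeg : q.natDegree = n := M.charpoly_natDegree_eq_dim
  have hmon : q.coeff n = 1 := by rw [← hdeg]; exact M.charpoly_monic
  have hCH : ∑ j ∈ Finset.range (n + 1), q.coeff j • M ^ j = 0 := by
    rw [← hdeg, ← Polynomial.aeval_eq_sum_range]
    exact M.aeval_self_charpoly
  -- The relation on the inputs left after Cayley–Hamilton has eliminated the state.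
  have hrec : ∀ i < L + n, ∑ j ∈ Finset.range (n + 1), q.coeff j • g ((i : ℤ) - j) = 0 := by
    refine hPE (fun i => ∑ j ∈ Finset.range (n + 1), q.coeff j • g ((i : ℤ) - j)) fun k hk => ?_
    have key : ∀ j ∈ Finset.range (n + 1), q.coeff j * ((ξ ᵥ* M ^ j) ⬝ᵥ z k)
        + q.coeff j * ∑ i ∈ Finset.range (L + n), g ((i : ℤ) - j) ⬝ᵥ u (k + i) = 0 := by
      intro j hj
      have hj' := Finset.mem_range.1 hj
      rw [← mul_add, ← functional_expand M B u z k j (L + n) (by omega)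
        (fun i hi => hz _ (by omega)), hf _ (by omega), mul_zero]
    have hsum := Finset.sum_eq_zero key
    have hstate : ∑ j ∈ Finset.range (n + 1), q.coeff j * ((ξ ᵥ* M ^ j) ⬝ᵥ z k) = 0 := by
      have : ∑ j ∈ Finset.range (n + 1), q.coeff j * ((ξ ᵥ* M ^ j) ⬝ᵥ z k)
          = ξ ⬝ᵥ ((∑ j ∈ Finset.range (n + 1), q.coeff j • M ^ j) *ᵥ z k) := by
        rw [Matrix.sum_mulVec, dotProduct_sum]
        refine Finset.sum_congr rfl fun j _ => ?_
        rw [smul_mulVec, dotProduct_smul, dotProduct_mulVec, smul_eq_mul]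
      rw [this, hCH, zero_mulVec, dotProduct_zero]
    rw [Finset.sum_add_distrib, hstate, zero_add] at hsum
    rw [← hsum]
    simp_rw [sum_dotProduct, smul_dotProduct, smul_eq_mul, Finset.mul_sum]
    exact Finset.sum_comm
  -- The recurrence is monic, so `g t` is determined by `g` at larger arguments.
  have hzero : ∀ m : ℕ, ∀ t : ℤ, (L : ℤ) - m ≤ t → -(n : ℤ) ≤ t → g t = 0 := by
    intro m
    induction m with
    | zero => exact fun t ht _ => hankelCoeff_of_ge _ _ _ _ _ (by simpa using ht)
    | succ m ih =>
      intro t ht htn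
      by_cases hL : (L : ℤ) ≤ t
      · exact hankelCoeff_of_ge _ _ _ _ _ hL
      have h := hrec (n + t).toNat (by omega)
      rw [Finset.sum_range_succ, hmon, one_smul, Finset.sum_eq_zero, zero_add] at h
      · rwa [show (((n + t).toNat : ℕ) : ℤ) - n = t by omega] at h
      · intro j hj
        have hj' := Finset.mem_range.1 hj
        rw [ih _ (by push_cast at ht; omega) (by omega), smul_zero]
  constructor
  · funext a
    rw [← hankelCoeff_of_lt M B ξ ζ a a.2]
    exact hzero L _ (by omega) (by omega)
  · intro m hm
    rw [← hankelCoeff_neg M B ξ ζ]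
    exact hzero (L + n) _ (by push_cast; omega) (by omega)

end Annihilator

/-- The reduced data matrix `[x; 1; u]` has linearly independent rows. -/
lemma reduced_rows_independent
    (nx nd nu N L : ℕ)
    (A : Matrix (Fin nx) (Fin nx) ℝ) (w : Fin nx → ℝ)
    (B : Matrix (Fin nx) (Fin nu) ℝ) (hnd : 1 < nd)
    (um : ℕ → Fin nu → ℝ) (xm : ℕ → Fin nx → ℝ)
    (htraj_x : ∀ k, k + 3 ≤ N + L + (nx + nd) → xm (k + 1) = A *ᵥ xm k + w + B *ᵥ um k)
    (hAB : (ctrbMat A B).rank = nx)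
    (hPE : (blockHankel um 0 (L + (nx + nd)) N).rank = (L + (nx + nd)) * nu) :
    LinearIndependent ℝ
      (fromRows (hankelState (fun k => Sum.elim (xm k) (fun _ : Unit => 1)) 0 (N + (nx + nd)))
              (blockHankel um 0 L (N + (nx + nd)))).row := by
  rw [← Matrix.vecMul_injective_iff, ← Matrix.coe_vecMulLinear, injective_iff_map_eq_zero]
  intro v hv
  rw [Matrix.vecMulLinear_apply] at hv
  set ξ : Fin nx ⊕ Unit → ℝ := fun r => v (Sum.inl r) with hξ
  set ζ : Fin L → Fin nu → ℝ := fun a r => v (Sum.inr (a, r)) with hζ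
  set z : ℕ → Fin nx ⊕ Unit → ℝ := fun k => Sum.elim (xm k) (fun _ => 1) with hz
  have hf : ∀ k < N + (nx + nd), ξ ⬝ᵥ z k + ∑ a : Fin L, ζ a ⬝ᵥ um (k + a) = 0 := by
    intro k hk
    have := congrFun hv ⟨k, hk⟩
    rw [vecMul, dotProduct, Fintype.sum_sum_type, Fintype.sum_prod_type] at this
    simpa [dotProduct, hankelState, blockHankel, hξ, hζ, hz, add_comm] using this
  have hcard : Fintype.card (Fin nx ⊕ Unit) = nx + 1 := by simp
  have hPE' : ∀ p : ℕ → Fin nu → ℝ,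
      (∀ k < N, ∑ i ∈ Finset.range (L + Fintype.card (Fin nx ⊕ Unit)), p i ⬝ᵥ um (k + i) = 0) →
      ∀ i < L + Fintype.card (Fin nx ⊕ Unit), p i = 0 := by
    intro p hp i hi
    rw [hcard] at hp hi
    -- A relation of order `L + nx + 1` is extended by zero to order `L + nx + nd`.
    have h0 := vecMul_eq_zero_of_rank (blockHankel um 0 (L + (nx + nd)) N)
      (by rw [hPE]; simp)
      (fun s => if (s.1 : ℕ) < L + (nx + 1) then p s.1 s.2 else 0) (by
        funext k
        refine Eq.trans ?_ (hp k k.2)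
        rw [vecMul, dotProduct, Fintype.sum_prod_type]
        rw [show Finset.range (L + (nx + 1)) =
          (Finset.range (L + (nx + nd))).filter (· < L + (nx + 1)) by ext; simp; omega,
          Finset.sum_filter, Finset.sum_range]
        refine Finset.sum_congr rfl fun a _ => ?_
        by_cases ha : (a : ℕ) < L + (nx + 1)
        · simp [ha, blockHankel, dotProduct, add_comm]
        · simp [ha])
    funext r
    have := congrFun h0 (⟨i, by omega⟩, r)
    simpa [hi] using this
  set M : Matrix (Fin nx ⊕ Unit) (Fin nx ⊕ Unit) ℝ :=
    fromBlocks A (replicateCol Unit w) 0 1 with hM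
  set Bb : Matrix (Fin nx ⊕ Unit) (Fin nu) ℝ := fromRows B 0 with hBb
  obtain ⟨hζ0, hξ0⟩ := annihilator_input_coeffs_zero M Bb um z N
    (by
      intro k hk
      rw [hcard] at hk
      funext r
      rcases r with r | r
      · have := congrFun (htraj_x k (by omega)) r
        simp [hz, hM, hBb, fromBlocks_mulVec, fromRows_mulVec, this, mulVec, dotProduct]
      · simp [hz, hM, hBb, fromBlocks_mulVec, fromRows_mulVec])
    hPE' ξ ζ (fun k hk => hf k (by rw [hcard] at hk; omega))
  have hpow : ∀ m : ℕ, M ^ m * Bb = fromRows (A ^ m * B) 0 := by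
    intro m
    induction m with
    | zero => simp [hBb]
    | succ m ih =>
      rw [pow_succ', Matrix.mul_assoc, ih, hM, fromBlocks_mul_fromRows, pow_succ']
      simp [Matrix.mul_assoc]
  have hx0 : (fun r => ξ (Sum.inl r)) = 0 := by
    refine vecMul_eq_zero_of_rank (ctrbMat A B) (by simpa using hAB) _ ?_
    funext p
    have := congrFun (hξ0 p.1 (by rw [hcard]; omega)) p.2
    rw [hpow] at this
    simpa [vecMul, dotProduct, ctrbMat] using this
  have hc0 : ξ (Sum.inr ()) = 0 := by
    have := hf 0 (by omega)
    have hx : ∀ r, ξ (Sum.inl r) = 0 := congrFun hx0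
    simpa [hζ0, dotProduct, hx, hz] using this
  funext s
  rcases s with (r | r) | ⟨a, r⟩
  · exact congrFun hx0 r
  · exact hc0
  · exact congrFun (congrFun hζ0 a) r

/-- **Corollary 1 (rank statement).** For the augmented system with a constant
nonzero disturbance (`A_d = I`, `d_k = d^m_0 ≠ 0`, `n_d > 1`):
`x_{k+1} = A x_k + B_d d + B u_k`. If `(A, B)` is controllable and the measured
input over time steps `0, ..., N + L + n̄ - 2` is persistently exciting of
order `L + n̄`, then the stacked augmented-state/input block-Hankel matrix has
rank exactly `L·n_u + n_x + 1`. -/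
theorem constant_disturbance_hankel_rank
    (nx nd nu N L : ℕ)
    (A : Matrix (Fin nx) (Fin nx) ℝ) (Bd : Matrix (Fin nx) (Fin nd) ℝ)
    (B : Matrix (Fin nx) (Fin nu) ℝ)
    (d : Fin nd → ℝ) (hd : d ≠ 0) (hnd : 1 < nd)
    (um : ℕ → Fin nu → ℝ) (xm : ℕ → Fin nx → ℝ)
    (htraj_x : ∀ k, k + 3 ≤ N + L + (nx + nd) →
      xm (k + 1) = A *ᵥ xm k + Bd *ᵥ d + B *ᵥ um k)
    (hAB : (ctrbMat A B).rank = nx)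
    (hPE : (blockHankel um 0 (L + (nx + nd)) N).rank = (L + (nx + nd)) * nu) :
    (fromRows (hankelState (fun k => Sum.elim (xm k) d) 0 (N + (nx + nd)))
              (blockHankel um 0 L (N + (nx + nd)))).rank
      = L * nu + nx + 1 := by
  set R' := fromRows (hankelState (fun k => Sum.elim (xm k) (fun _ : Unit => (1 : ℝ))) 0
    (N + (nx + nd))) (blockHankel um 0 L (N + (nx + nd))) with hR'
  set R := fromRows (hankelState (fun k => Sum.elim (xm k) d) 0 (N + (nx + nd)))
    (blockHankel um 0 L (N + (nx + nd))) with hR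
  have hrank : R'.rank = L * nu + nx + 1 := by
    rw [(reduced_rows_independent nx nd nu N L A (Bd *ᵥ d) B hnd um xm htraj_x hAB hPE).rank_matrix]
    simp
    ring
  have hdd : d ⬝ᵥ d ≠ 0 := fun h => hd (dotProduct_self_eq_zero.1 h)
  let E : Matrix ((Fin nx ⊕ Fin nd) ⊕ (Fin L × Fin nu)) ((Fin nx ⊕ Unit) ⊕ (Fin L × Fin nu)) ℝ :=
    fromBlocks (fromBlocks 1 0 0 (replicateCol Unit d)) 0 0 1
  -- A left inverse of `E`: the disturbance rows are collapsed by the functional `d ↦ 1`.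
  let F : Matrix ((Fin nx ⊕ Unit) ⊕ (Fin L × Fin nu)) ((Fin nx ⊕ Fin nd) ⊕ (Fin L × Fin nu)) ℝ :=
    fromBlocks (fromBlocks 1 0 0 (replicateRow Unit ((d ⬝ᵥ d)⁻¹ • d))) 0 0 1
  have h1 : R = E * R' := by
    rw [show E = fromBlocks (fromBlocks 1 0 0 (replicateCol Unit d)) 0 0 1 from rfl, hR, hR', fromBlocks_mul_fromRows]
    simp only [Matrix.zero_mul, add_zero, zero_add, Matrix.one_mul]
    congr 1
    ext r b
    rcases r with r | r <;> simp [Matrix.mul_apply, hankelState, Matrix.one_apply]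
  have h2 : R' = F * R := by
    rw [show F = fromBlocks (fromBlocks 1 0 0 (replicateRow Unit ((d ⬝ᵥ d)⁻¹ • d))) 0 0 1 from rfl,
      hR, hR', fromBlocks_mul_fromRows]
    simp only [Matrix.zero_mul, add_zero, zero_add, Matrix.one_mul]
    congr 1
    ext r b
    rcases r with r | r
    · simp [Matrix.mul_apply, hankelState, Matrix.one_apply]
    · simp only [Matrix.mul_apply, hankelState, Fintype.sum_sum_type, of_apply, fromBlocks_apply₂₁,
        fromBlocks_apply₂₂, Matrix.zero_apply, zero_mul, Finset.sum_const_zero, zero_add,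
        Sum.elim_inr, replicateRow_apply, Pi.smul_apply, smul_eq_mul, mul_assoc, ← Finset.mul_sum]
      exact (inv_mul_cancel₀ hdd).symm
  rw [← hrank]
  apply le_antisymm
  · rw [h1]
    exact rank_mul_le_right _ _
  · rw [h2]
    exact rank_mul_le_right _ _
end
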